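/- Let G be a cochordal finite simple graph (i.e., the complement G^c is chordal). Then for every k with 1 ≤ k ≤ ν(G), the squarefree power I(G)^{[k]} has linear quotients. -/

import Mathlib

open MvPolynomial

section Preamble

variable (K : Type*) [Field K] {σ : Type*} [Fintype σ] [DecidableEq σ]

/-- A (monic) monomial of the polynomial ring. -/
def IsMonomial (f : MvPolynomial σ K) : Prop :=
  ∃ d : σ →₀ ℕ, f = monomial d 1

/-- An ideal generated by monomials. -/
def IsMonomialIdeal (I : Ideal (MvPolynomial σ K)) : Prop :=
  ∃ A : Set (MvPolynomial σ K), (∀ u ∈ A, IsMonomial K u) ∧ I = Ideal.span A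

/-- The unique minimal set of monomial generators `G(I)` of a monomial ideal:
the monomials of `I` that are minimal with respect to divisibility. -/
def minGens (I : Ideal (MvPolynomial σ K)) : Set (MvPolynomial σ K) :=
  {u | IsMonomial K u ∧ u ∈ I ∧ ∀ v, IsMonomial K v → v ∈ I → v ∣ u → v = u}

/-- A squarefree monomial ideal. -/
def IsSqfreeMonomialIdeal (I : Ideal (MvPolynomial σ K)) : Prop :=
  IsMonomialIdeal K I ∧ ∀ u ∈ minGens K I, Squarefree u

/-- The `k`-th squarefree power `I^{[k]}`: the ideal generated by the squarefree
products of `k` minimal monomial generators of `I`. -/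
noncomputable def sqPow (I : Ideal (MvPolynomial σ K)) (k : ℕ) : Ideal (MvPolynomial σ K) :=
  Ideal.span {u | Squarefree u ∧ ∃ l : List (MvPolynomial σ K),
    l.length = k ∧ (∀ f ∈ l, f ∈ minGens K I) ∧ u = l.prod}

/-- `ν(I)`: the maximum length of a regular sequence of monomials in `I`. -/
noncomputable def monNu (I : Ideal (MvPolynomial σ K)) : ℕ :=
  sSup {m | ∃ l : List (MvPolynomial σ K), l.length = m ∧
    (∀ f ∈ l, IsMonomial K f ∧ f ∈ I) ∧
    RingTheory.Sequence.IsRegular (MvPolynomial σ K) l}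

/-- The minimal degree `d` of a minimal monomial generator of `I`
(so `d_k = minDeg (I^{[k]})`). -/
noncomputable def minDeg (I : Ideal (MvPolynomial σ K)) : ℕ :=
  sInf (totalDegree '' minGens K I)

/-- `depth(S/I)`: the maximum length of an `S/I`-regular sequence of elements of
the graded maximal ideal `(x_1, …, x_n)`. -/
noncomputable def qdepth (I : Ideal (MvPolynomial σ K)) : ℕ :=
  sSup {m | ∃ l : List (MvPolynomial σ K), l.length = m ∧
    (∀ f ∈ l, f ∈ Ideal.span (Set.range (X : σ → MvPolynomial σ K))) ∧
    RingTheory.Sequence.IsRegular (MvPolynomial σ K ⧸ I) l}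

/-- `I` has linear quotients with respect to the ordering `L` of its minimal
monomial generators: each successive colon ideal is generated by variables. -/
def HasLinearQuotientsOrder (I : Ideal (MvPolynomial σ K))
    (L : List (MvPolynomial σ K)) : Prop :=
  L.Nodup ∧ (∀ u, u ∈ L ↔ u ∈ minGens K I) ∧
  ∀ i : Fin L.length, 0 < (i : ℕ) →
    ∃ A : Set σ,
      Submodule.colon (Ideal.span {u | u ∈ L.take (i : ℕ)}) (Ideal.span {L.get i})
        = Ideal.span (X '' A)

/-- A monomial ideal with linear quotients. -/
def HasLinearQuotients (I : Ideal (MvPolynomial σ K)) : Prop :=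
  ∃ L, HasLinearQuotientsOrder K I L

/-- A polymatroidal ideal: a monomial ideal generated in a single degree whose
minimal generators satisfy the exchange property. -/
def IsPolymatroidal (I : Ideal (MvPolynomial σ K)) : Prop :=
  IsMonomialIdeal K I ∧
  (∃ d, ∀ u ∈ minGens K I, totalDegree u = d) ∧
  ∀ u ∈ minGens K I, ∀ v ∈ minGens K I, ∀ k : σ,
    degreeOf k v < degreeOf k u →
    ∃ l : σ, degreeOf l u < degreeOf l v ∧
      ∃ w, u = X k * w ∧ X l * w ∈ minGens K I

/-- A matroidal ideal: a polymatroidal ideal all of whose minimal generators are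
squarefree. -/
def IsMatroidal (I : Ideal (MvPolynomial σ K)) : Prop :=
  IsPolymatroidal K I ∧ ∀ u ∈ minGens K I, Squarefree u

/-- The squarefree part of a monomial ideal: the ideal generated by its squarefree
minimal generators. -/
noncomputable def sqfPart (I : Ideal (MvPolynomial σ K)) : Ideal (MvPolynomial σ K) :=
  Ideal.span {u | u ∈ minGens K I ∧ Squarefree u}

/-- The squarefree Veronese ideal `𝔪^{[d]}`, generated by all squarefree
monomials of degree `d`. -/
noncomputable def veronese (d : ℕ) : Ideal (MvPolynomial σ K) :=
  Ideal.span {u | ∃ F : Finset σ, F.card = d ∧ u = ∏ i ∈ F, X i}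

/-- A chordal graph: no induced cycle of length greater than 3. -/
def IsChordal {V : Type*} (G : SimpleGraph V) : Prop :=
  ∀ m : ℕ, 4 ≤ m → ¬ ∃ f : ZMod m → V, Function.Injective f ∧
    ∀ i j : ZMod m, G.Adj (f i) (f j) ↔ (i = j + 1 ∨ j = i + 1)

/-- A matching of `G`: a finite set of pairwise vertex-disjoint edges of `G`. -/
def IsMatching (G : SimpleGraph σ) (M : Finset (Sym2 σ)) : Prop :=
  (↑M ⊆ G.edgeSet) ∧ (M : Set (Sym2 σ)).Pairwise fun e f => ∀ v, v ∈ e → v ∉ f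

/-- A `k`-matching of `G`. -/
def IsKMatching (G : SimpleGraph σ) (M : Finset (Sym2 σ)) (k : ℕ) : Prop :=
  IsMatching G M ∧ M.card = k

/-- The vertex set `V(M)` of a matching. -/
def mVerts (M : Finset (Sym2 σ)) : Finset σ :=
  Finset.univ.filter fun v => ∃ e ∈ M, v ∈ e

/-- The squarefree monomial `∏_{v ∈ V(M)} x_v` attached to a matching. -/
noncomputable def matchMon (M : Finset (Sym2 σ)) : MvPolynomial σ K :=
  ∏ v ∈ mVerts M, X v

/-- The edge ideal `I(G)` of a finite simple graph `G`. -/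
noncomputable def edgeIdeal (G : SimpleGraph σ) : Ideal (MvPolynomial σ K) :=
  Ideal.span {u | ∃ i j, G.Adj i j ∧ u = X i * X j}

/-- The `k`-th squarefree power `I(G)^{[k]}` of the edge ideal, generated by the
monomials `∏_{v ∈ V(M)} x_v` of the `k`-matchings `M` of `G`. -/
noncomputable def matchPow (G : SimpleGraph σ) (k : ℕ) : Ideal (MvPolynomial σ K) :=
  Ideal.span {u | ∃ M : Finset (Sym2 σ), IsKMatching G M k ∧ u = matchMon K M}

/-- The matching number `ν(G)`. -/
noncomputable def matchNum (G : SimpleGraph σ) : ℕ :=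
  sSup {k | ∃ M : Finset (Sym2 σ), IsKMatching G M k}

end Preamble

/-!
Let `r` rank the vertices along a perfect elimination order of `Gᶜ`: if `jl` is an edge of `G` and
`i` has lower rank than both `j` and `l`, then `i` is adjacent in `G` to `j` or to `l`. Weight each
edge by its lower rank and then its higher rank, and compare matchings colexicographically.

Suppose `N < M` are `k`-matchings that first differ, from the top, at the edge `jl ∈ M`. Below `jl`
the matching `N` has one edge more than `M`, so the part of `M` below `jl` can be augmented along
`N`, by Berge, to cover two further vertices `a`, `b` of `N`. By the choice of weights the edge of
the augmented matching at `a` has an end joined by a light edge to `j` or to `l`, and rerouting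
through it gives a matching `M' < M` with `V(M') ⊆ V(M) ∪ {v}` for a single vertex `v ∈ V(N)`.
Listing every generator at its smallest matching therefore gives linear quotients.
-/

section PerfectElimination

variable {V W : Type*} {H : SimpleGraph V}

theorem IsChordal.comap (hH : IsChordal H) (f : W ↪ V) : IsChordal (H.comap f) := by
  rintro m hm ⟨c, hc, hadj⟩
  exact hH m hm ⟨f ∘ c, f.injective.comp hc, hadj⟩

theorem dist_getVert_of_length_eq_dist {s t : V} {p : H.Walk s t} (hp : p.length = H.dist s t)
    {i : ℕ} (hi : i ≤ p.length) : H.dist s (p.getVert i) = i := by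
  rw [← SimpleGraph.length_eq_dist_of_subwalk hp (p.isSubwalk_take i), p.take_length,
    min_eq_left hi]

theorem adj_getVert_iff_of_length_eq_dist {s t : V} {p : H.Walk s t}
    (hp : p.length = H.dist s t) {i j : ℕ} (hi : i ≤ p.length) (hj : j ≤ p.length) :
    H.Adj (p.getVert i) (p.getVert j) ↔ i = j + 1 ∨ j = i + 1 := by
  constructor
  · intro hadj
    have hne : i ≠ j := by rintro rfl; exact hadj.ne rfl
    have hdist := hadj.diff_dist_adj (u := s)
    rw [dist_getVert_of_length_eq_dist hp hi, dist_getVert_of_length_eq_dist hp hj] at hdist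
    lia
  · rintro (rfl | rfl)
    · exact (p.adj_getVert_succ hi).symm
    · exact p.adj_getVert_succ hj

theorem fin_eq_add_one_iff {m : ℕ} (a b : Fin (m + 1)) :
    a = b + 1 ↔ a.val = b.val + 1 ∨ a.val = 0 ∧ b.val = m := by
  have := a.is_lt
  rw [Fin.ext_iff, Fin.val_add_one]
  split_ifs with hb
  · simp only [hb, Fin.val_last]
    lia
  · have : b.val ≠ m := fun h => hb (Fin.ext h)
    lia

theorem zmod_eq_add_one_iff {m : ℕ} (a b : ZMod (m + 1)) :
    a = b + 1 ↔ a.val = b.val + 1 ∨ a.val = 0 ∧ b.val = m :=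
  fin_eq_add_one_iff a b

theorem IsChordal.false_of_chordless_path_of_apex (hH : IsChordal H) {x : V} {q : ℕ → V} {m : ℕ}
    (hm : 2 ≤ m) (hinj : Set.InjOn q (Set.Iic m))
    (hadj : ∀ i ≤ m, ∀ j ≤ m, H.Adj (q i) (q j) ↔ i = j + 1 ∨ j = i + 1)
    (hstart : H.Adj x (q 0)) (hend : H.Adj x (q m))
    (hinterior : ∀ i, 0 < i → i < m → Hᶜ.Adj x (q i)) : False := by
  have hx : ∀ i ≤ m, q i ≠ x ∧ (H.Adj x (q i) ↔ i = 0 ∨ i = m) := fun i hi => by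
    rcases i.eq_zero_or_pos with rfl | hpos
    · simp [hstart, hstart.ne']
    rcases hi.eq_or_lt with rfl | hlt
    · simp [hend, hend.ne']
    · exact ⟨(hinterior i hpos hlt).ne', iff_of_false (hinterior i hpos hlt).2 (by lia)⟩
  refine hH (m + 2) (by lia) ⟨fun a => if a.val ≤ m then q a.val else x, fun a b hab => ?_,
    fun a b => ?_⟩
  · have := ZMod.val_lt a
    have := ZMod.val_lt b
    apply ZMod.val_injective
    dsimp only at hab
    split_ifs at hab with ha hb hb
    · exact hinj ha hb hab
    · exact absurd hab (hx _ ha).1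
    · exact absurd hab.symm (hx _ hb).1
    · lia
  · have := ZMod.val_lt a
    have := ZMod.val_lt b
    rw [zmod_eq_add_one_iff, zmod_eq_add_one_iff]
    beta_reduce
    split_ifs with ha hb hb
    · rw [hadj _ ha _ hb]; lia
    · rw [H.adj_comm, (hx _ ha).2]; lia
    · rw [(hx _ hb).2]; lia
    · exact iff_of_false H.irrefl (by lia)

/-- `C` is a nonempty union of connected components of the graph obtained from `H` by deleting `x`
and its neighbours. -/
structure IsRemote (H : SimpleGraph V) (x : V) (C : Set V) : Prop where
  nonempty : C.Nonempty
  compl_adj : ∀ c ∈ C, Hᶜ.Adj x c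
  adj_of_adj : ∀ c ∈ C, ∀ y ∉ C, H.Adj c y → H.Adj x y

theorem isRemote_compl_neighborSet {x w : V} (h : Hᶜ.Adj x w) :
    IsRemote H x (Hᶜ.neighborSet x) where
  nonempty := ⟨w, h⟩
  compl_adj _ hc := hc
  adj_of_adj c hc y hy hcy := by
    by_contra hxy
    obtain rfl : y = x := by
      by_contra hne
      exact hy ⟨Ne.symm hne, hxy⟩
    exact hc.2 hcy.symm

theorem isRemote_inter_compl_neighborSet {u y : V} {C : Set V} (hy : y ∈ C) (huy : Hᶜ.Adj u y)
    (hboundary : ∀ c ∈ C, ∀ z ∉ C, H.Adj c z → z ≠ u → H.Adj u z) :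
    IsRemote H u (C ∩ Hᶜ.neighborSet u) where
  nonempty := ⟨y, hy, huy⟩
  compl_adj _ hc := hc.2
  adj_of_adj c hc z hz hcz := by
    have hzu : z ≠ u := by rintro rfl; exact hc.2.2 hcz.symm
    by_cases hzC : z ∈ C
    · by_contra huz
      exact hz ⟨hzC, hzu.symm, huz⟩
    · exact hboundary c hc.1 z hzC hcz hzu

theorem preconnected_induce_of_minimal_isRemote {x : V} {C : Set V}
    (hC : Minimal (IsRemote H x) C) : (H.induce C).Preconnected := by
  intro a b
  let R : Set V := {z | ∃ hz : z ∈ C, (H.induce C).Reachable a ⟨z, hz⟩}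
  have hRC : R ⊆ C := fun z hz => hz.1
  have hR : IsRemote H x R :=
    { nonempty := ⟨a, a.2, .rfl⟩
      compl_adj := fun c hc => hC.prop.compl_adj c (hRC hc)
      adj_of_adj := fun c ⟨hcC, hac⟩ y hy hcy => by
        refine hC.prop.adj_of_adj c hcC y (fun hyC => hy ⟨hyC, hac.trans ?_⟩) hcy
        exact SimpleGraph.Adj.reachable (G := H.induce C) (u := ⟨c, hcC⟩) (v := ⟨y, hyC⟩) hcy }
  exact (hC.2 hR hRC b.2).2

theorem IsRemote.adj_of_isChordal {x : V} {C : Set V} (hC : IsRemote H x C) (hH : IsChordal H)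
    (hconn : (H.induce C).Preconnected) {s t c d : V} (hst : s ≠ t) (hxs : H.Adj x s)
    (hxt : H.Adj x t) (hc : c ∈ C) (hd : d ∈ C) (hcs : H.Adj c s) (hdt : H.Adj d t) :
    H.Adj s t := by
  by_contra hnadj
  let D : Set V := {z | z = s ∨ z = t ∨ z ∈ C}
  let s' : D := ⟨s, .inl rfl⟩
  let t' : D := ⟨t, .inr (.inl rfl)⟩
  have hCD : C ⊆ D := fun z hz => .inr (.inr hz)
  have hreach : (H.induce D).Reachable s' t' := by
    have hcd := (hconn ⟨c, hc⟩ ⟨d, hd⟩).map (SimpleGraph.induceHomOfLE H hCD).toHom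
    have hsc' : (H.induce D).Adj s' ⟨c, hCD hc⟩ := hcs.symm
    have hdt' : (H.induce D).Adj ⟨d, hCD hd⟩ t' := hdt
    exact hsc'.reachable.trans (hcd.trans hdt'.reachable)
  -- A shortest path from `s` to `t` through `C`, closed up by `x`, is an induced cycle.
  obtain ⟨p, hpath, hp⟩ := hreach.exists_path_of_dist
  have hlen : 2 ≤ p.length := by
    rw [hp]
    exact hreach.one_lt_dist_of_ne_of_not_adj (fun h => hst (congrArg Subtype.val h)) hnadj
  refine hH.false_of_chordless_path_of_apex (x := x) (q := fun i => (p.getVert i : V)) hlen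
    (fun i hi j hj hij => hpath.getVert_injOn hi hj (Subtype.ext hij))
    (fun i hi j hj => adj_getVert_iff_of_length_eq_dist hp hi hj)
    (by simpa using hxs) (by simpa using hxt) fun i hpos hlt => ?_
  rcases (p.getVert i).2 with hi | hi | hi
  · have : p.getVert i = p.getVert 0 := by rw [p.getVert_zero]; exact Subtype.ext hi
    exact absurd (hpath.getVert_injOn hlt.le (Nat.zero_le _) this) hpos.ne'
  · have : p.getVert i = p.getVert p.length := by rw [p.getVert_length]; exact Subtype.ext hi
    exact absurd (hpath.getVert_injOn hlt.le (le_refl p.length) this) hlt.ne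
  · exact hC.compl_adj _ hi

theorem adj_of_minimal_isRemote {C : Set V} (hC : Minimal (fun C => ∃ x, IsRemote H x C) C)
    {u w y : V} (hw : w ∈ C) (huw : ¬ Hᶜ.Adj u w)
    (hboundary : ∀ c ∈ C, ∀ z ∉ C, H.Adj c z → z ≠ u → H.Adj u z) (hy : y ∈ C) (huy : u ≠ y) :
    H.Adj u y := by
  by_contra hnadj
  have hsmaller := isRemote_inter_compl_neighborSet hy ⟨huy, hnadj⟩ hboundary
  exact huw (hC.2 ⟨u, hsmaller⟩ Set.inter_subset_left hw).2

theorem IsChordal.exists_isClique_neighborSet [Finite V] [Nonempty V] (hH : IsChordal H) :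
    ∃ u, H.IsClique (H.neighborSet u) := by
  by_cases hcomplete : ∀ x w, x ≠ w → H.Adj x w
  · exact ⟨Classical.arbitrary V, fun x _ w _ => hcomplete x w⟩
  push Not at hcomplete
  obtain ⟨x₀, w₀, h₀⟩ := hcomplete
  obtain ⟨C, hC⟩ := exists_minimal_of_wellFoundedLT (fun C => ∃ x, IsRemote H x C)
    ⟨_, x₀, isRemote_compl_neighborSet (w := w₀) h₀⟩
  obtain ⟨x, hx⟩ := hC.prop
  have hconn : (H.induce C).Preconnected :=
    preconnected_induce_of_minimal_isRemote ⟨hx, fun D hD hDC => hC.2 ⟨x, hD⟩ hDC⟩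
  have boundary_boundary : ∀ c ∈ C, ∀ s ∉ C, H.Adj c s → ∀ d ∈ C, ∀ t ∉ C, H.Adj d t → s ≠ t →
      H.Adj s t := fun c hc s hs hcs d hd t ht hdt hst =>
    hx.adj_of_isChordal hH hconn hst (hx.adj_of_adj c hc s hs hcs) (hx.adj_of_adj d hd t ht hdt)
      hc hd hcs hdt
  have boundary_inside : ∀ c ∈ C, ∀ s ∉ C, H.Adj c s → ∀ y ∈ C, H.Adj s y :=
    fun c hc s hs hcs y hy => adj_of_minimal_isRemote hC hc (fun h => h.2 hcs.symm)
      (fun d hd t ht hdt hts => boundary_boundary c hc s hs hcs d hd t ht hdt hts.symm) hy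
      (fun h => hs (h ▸ hy))
  have inside_inside : ∀ u ∈ C, ∀ y ∈ C, u ≠ y → H.Adj u y := fun u hu y hy =>
    adj_of_minimal_isRemote hC hu (fun h => h.1 rfl)
      (fun c hc z hz hcz _ => (boundary_inside c hc z hz hcz u hu).symm) hy
  obtain ⟨u, hu⟩ := hx.nonempty
  refine ⟨u, fun a (hua : H.Adj u a) b (hub : H.Adj u b) hab => ?_⟩
  by_cases ha : a ∈ C <;> by_cases hb : b ∈ C
  · exact inside_inside a ha b hb hab
  · exact (boundary_inside u hu b hb hub a ha).symm
  · exact boundary_inside u hu a ha hua b hb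
  · exact boundary_boundary u hu a ha hua u hu b hb hub hab

/-- `r` ranks the vertices of `H` in a perfect elimination order: the higher ranked neighbours of
each vertex form a clique. -/
structure IsPerfectElimination (H : SimpleGraph V) (r : V → ℕ) : Prop where
  injective : Function.Injective r
  isClique : ∀ i, H.IsClique {j | H.Adj i j ∧ r i < r j}

theorem IsChordal.exists_isPerfectElimination [Finite V] (hH : IsChordal H) :
    ∃ r, IsPerfectElimination H r := by
  classical
  induction hn : Nat.card V using Nat.strong_induction_on generalizing V with
  | _ n ih =>
  cases isEmpty_or_nonempty V with
  | inl _ => exact ⟨fun _ => 0, fun i => isEmptyElim i, fun i => isEmptyElim i⟩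
  | inr _ =>
  obtain ⟨u, hu⟩ := hH.exists_isClique_neighborSet
  have hcard : Nat.card {v // v ≠ u} < n := hn ▸ Finite.card_subtype_lt (x := u) (by simp)
  obtain ⟨r, hr⟩ := ih _ hcard (hH.comap (Function.Embedding.subtype (· ≠ u))) rfl
  refine ⟨fun v => if hv : v = u then 0 else r ⟨v, hv⟩ + 1, fun i j hij => ?_,
    fun i j ⟨hij, hrij⟩ l ⟨hil, hril⟩ hjl => ?_⟩
  · beta_reduce at hij
    split_ifs at hij with hi hj hj
    · rw [hi, hj]
    · exact congrArg Subtype.val (hr.injective (Nat.succ_injective hij))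
  · by_cases hi : i = u
    · subst hi
      exact hu hij hil hjl
    have hj : j ≠ u := by rintro rfl; simp at hrij
    have hl : l ≠ u := by rintro rfl; simp at hril
    simp only [hi, hj, hl, dif_neg, not_false_eq_true, add_lt_add_iff_right] at hrij hril
    exact hr.isClique ⟨i, hi⟩ (x := ⟨j, hj⟩) ⟨hij, hrij⟩ (y := ⟨l, hl⟩) ⟨hil, hril⟩
      (by simpa using hjl)

theorem IsPerfectElimination.adj_or_adj_of_compl {G : SimpleGraph V} {r : V → ℕ}
    (hr : IsPerfectElimination Gᶜ r) {i j l : V} (hij : r i < r j) (hil : r i < r l)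
    (hjl : G.Adj j l) : G.Adj i j ∨ G.Adj i l := by
  by_contra! hnadj
  have hij' : i ≠ j := by rintro rfl; exact hij.ne rfl
  have hil' : i ≠ l := by rintro rfl; exact hil.ne rfl
  exact (hr.isClique i ⟨⟨hij', hnadj.1⟩, hij⟩ ⟨⟨hil', hnadj.2⟩, hil⟩ hjl.ne).2 hjl

end PerfectElimination

section Matching

variable {σ : Type*} {F : SimpleGraph σ} {M N E : Finset (Sym2 σ)} {S : Finset σ}

/-- Every edge of `F` disjoint from `{j, l}` has an end that is adjacent to `j` or to `l`. The pair
`j`, `l` itself need not be an edge of `F`. -/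
def IsEdgeLinked (F : SimpleGraph σ) (j l : σ) : Prop :=
  ∀ a y, F.Adj a y → a ≠ j → a ≠ l → y ≠ j → y ≠ l →
    (F.Adj a j ∨ F.Adj a l) ∨ (F.Adj y j ∨ F.Adj y l)

theorem IsMatching.mono (hM : IsMatching F M) (h : N ⊆ M) : IsMatching F N :=
  ⟨fun _ he => hM.1 (h he), hM.2.mono h⟩

theorem IsMatching.mono_graph {G : SimpleGraph σ} (hM : IsMatching F M) (h : F ≤ G) :
    IsMatching G M :=
  ⟨hM.1.trans (SimpleGraph.edgeSet_mono h), hM.2⟩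

theorem IsMatching.eq_of_mem (hM : IsMatching F M) {e f : Sym2 σ} (he : e ∈ M) (hf : f ∈ M)
    {v : σ} (hve : v ∈ e) (hvf : v ∈ f) : e = f := by
  by_contra hef
  exact hM.2 he hf hef v hve hvf

theorem isMatching_singleton {a b : σ} (hab : F.Adj a b) : IsMatching F {s(a, b)} := by
  refine ⟨by simpa using hab, ?_⟩
  rw [Finset.coe_singleton]
  exact Set.pairwise_singleton _ _

/-- `S` is a union of connected components of the graph with edge set `E`. -/
def IsEdgeClosed (E : Finset (Sym2 σ)) (S : Finset σ) : Prop :=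
  ∀ e ∈ E, ∀ v ∈ e, v ∈ S → ∀ w ∈ e, w ∈ S

theorem IsEdgeClosed.mono (hS : IsEdgeClosed N S) (h : M ⊆ N) : IsEdgeClosed M S :=
  fun e he => hS e (h he)

theorem isEdgeClosed_of_coe_eq_supp
    {C : (SimpleGraph.fromEdgeSet (E : Set (Sym2 σ))).ConnectedComponent}
    (hS : (S : Set σ) = C.supp) : IsEdgeClosed E S := by
  intro e he v hve hv w hwe
  rw [← Finset.mem_coe, hS] at hv ⊢
  by_cases hvw : v = w
  · rwa [← hvw]
  refine C.mem_supp_of_adj_mem_supp hv ?_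
  rw [SimpleGraph.fromEdgeSet_adj]
  exact ⟨(Sym2.mem_and_mem_iff hvw).1 ⟨hve, hwe⟩ ▸ he, hvw⟩

variable [DecidableEq σ]

/-- The edges of `E` that have an end in `S`. -/
def edgesMeeting (E : Finset (Sym2 σ)) (S : Finset σ) : Finset (Sym2 σ) :=
  {e ∈ E | ∃ v ∈ S, v ∈ e}

theorem edgesMeeting_subset : edgesMeeting E S ⊆ E :=
  Finset.filter_subset _ _

theorem edgesMeeting_union :
    edgesMeeting (M ∪ N) S = edgesMeeting M S ∪ edgesMeeting N S :=
  Finset.filter_union ..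

theorem card_le_card_edgesMeeting_add_one
    {C : (SimpleGraph.fromEdgeSet (E : Set (Sym2 σ))).ConnectedComponent}
    (hS : (S : Set σ) = C.supp) : S.card ≤ (edgesMeeting E S).card + 1 := by
  have : Finite C := by
    change Finite C.supp
    rw [← hS]
    infer_instance
  have hmem : ∀ e : C.toSimpleGraph.edgeSet, (e : Sym2 C).map Subtype.val ∈ edgesMeeting E S := by
    rintro ⟨⟨u, v⟩, he⟩
    have hu : (u : σ) ∈ S := Finset.mem_coe.1 (hS ▸ u.2)
    exact Finset.mem_filter.2 ⟨((SimpleGraph.fromEdgeSet_adj _).1 he).1, u, hu, by simp⟩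
  have hedges : Nat.card C.toSimpleGraph.edgeSet ≤ (edgesMeeting E S).card := by
    rw [← Nat.card_eq_finsetCard]
    exact Nat.card_le_card_of_injective (fun e => ⟨_, hmem e⟩) fun e f hef =>
      Subtype.ext (Sym2.map.injective Subtype.val_injective (congrArg Subtype.val hef))
  have hcard : S.card = Nat.card C := by
    rw [← Nat.card_eq_finsetCard]
    exact congrArg (fun A : Set σ => Nat.card A) hS
  calc S.card = Nat.card C := hcard
    _ ≤ Nat.card C.toSimpleGraph.edgeSet + 1 :=
      C.connected_toSimpleGraph.card_vert_le_card_edgeSet_add_one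
    _ ≤ _ := Nat.add_le_add_right hedges 1

theorem exists_component_card_inter_lt [Finite σ] {J : SimpleGraph σ} {A B : Finset σ}
    (h : A.card < B.card) :
    ∃ (C : J.ConnectedComponent) (S : Finset σ), (S : Set σ) = C.supp ∧
      (A ∩ S).card < (B ∩ S).card := by
  classical
  have := Fintype.ofFinite σ
  let comp (C : J.ConnectedComponent) : Finset σ := {v | J.connectedComponentMk v = C}
  have hsum : ∀ D : Finset σ, ∑ C, (D ∩ comp C).card = D.card := fun D => by
    rw [Finset.card_eq_sum_card_fiberwise (f := J.connectedComponentMk) (t := Finset.univ)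
      (fun _ _ => Finset.mem_coe.2 (Finset.mem_univ _))]
    simp only [comp, Finset.inter_filter, Finset.inter_univ]
  rw [← hsum A, ← hsum B] at h
  obtain ⟨C, -, hC⟩ := Finset.exists_lt_of_sum_lt h
  exact ⟨C, comp C, by ext v; simp [comp], hC⟩

variable [Fintype σ]

theorem mem_mVerts {v : σ} : v ∈ mVerts M ↔ ∃ e ∈ M, v ∈ e := by
  simp [mVerts]

theorem exists_mk_mem_of_mem_mVerts {a : σ} (ha : a ∈ mVerts M) : ∃ y, s(a, y) ∈ M := by
  obtain ⟨e, he, y, rfl⟩ := mem_mVerts.1 ha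
  exact ⟨y, he⟩

theorem mVerts_mono (h : M ⊆ N) : mVerts M ⊆ mVerts N := fun _ hv =>
  let ⟨e, he, hve⟩ := mem_mVerts.1 hv
  mem_mVerts.2 ⟨e, h he, hve⟩

theorem mVerts_union : mVerts (M ∪ N) = mVerts M ∪ mVerts N := by
  ext v
  simp only [mem_mVerts, Finset.mem_union, or_and_right, exists_or]

theorem mVerts_singleton (a b : σ) : mVerts {s(a, b)} = {a, b} := by
  ext v
  simp [mem_mVerts]

theorem mVerts_insert (a b : σ) :
    mVerts (insert s(a, b) M) = insert a (insert b (mVerts M)) := by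
  rw [Finset.insert_eq, mVerts_union, mVerts_singleton, Finset.insert_union,
    Finset.singleton_union]

theorem IsMatching.union (hM : IsMatching F M) (hN : IsMatching F N)
    (h : Disjoint (mVerts M) (mVerts N)) : IsMatching F (M ∪ N) := by
  have hdisj : ∀ e ∈ M, ∀ f ∈ N, ∀ v ∈ e, v ∉ f := fun e he f hf v hve hvf =>
    Finset.disjoint_left.1 h (mem_mVerts.2 ⟨e, he, hve⟩) (mem_mVerts.2 ⟨f, hf, hvf⟩)
  refine ⟨?_, ?_⟩
  · rw [Finset.coe_union]
    exact Set.union_subset hM.1 hN.1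
  · rw [Finset.coe_union, Set.pairwise_union]
    exact ⟨hM.2, hN.2, fun e he f hf _ =>
      ⟨hdisj e he f hf, fun v hvf hve => hdisj e he f hf v hve hvf⟩⟩

theorem IsMatching.card_mVerts (hM : IsMatching F M) : (mVerts M).card = 2 * M.card := by
  have hbiUnion : mVerts M = M.biUnion Sym2.toFinset := by
    ext v
    simp [mem_mVerts]
  rw [hbiUnion, Finset.card_biUnion fun e he f hf hef => Finset.disjoint_left.2 fun v hve hvf =>
    hM.2 he hf hef v (Sym2.mem_toFinset.1 hve) (Sym2.mem_toFinset.1 hvf)]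
  rw [Finset.sum_const_nat fun e he =>
    Sym2.card_toFinset_of_not_isDiag e (F.not_isDiag_of_mem_edgeSet (hM.1 he)), mul_comm]

theorem disjoint_of_disjoint_mVerts (h : Disjoint (mVerts M) (mVerts N)) : Disjoint M N := by
  refine Finset.disjoint_left.2 fun e heM heN => ?_
  obtain ⟨v, hv⟩ : ∃ v, v ∈ e := e.ind fun a b => ⟨a, Sym2.mem_mk_left a b⟩
  exact Finset.disjoint_left.1 h (mem_mVerts.2 ⟨e, heM, hv⟩) (mem_mVerts.2 ⟨e, heN, hv⟩)

theorem IsKMatching.union {k m : ℕ} (hM : IsKMatching F M k) (hN : IsKMatching F N m)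
    (h : Disjoint (mVerts M) (mVerts N)) : IsKMatching F (M ∪ N) (k + m) := by
  refine ⟨hM.1.union hN.1 h, ?_⟩
  rw [Finset.card_union_of_disjoint (disjoint_of_disjoint_mVerts h), hM.2, hN.2]

theorem IsKMatching.card_mVerts {k : ℕ} (hM : IsKMatching F M k) : (mVerts M).card = 2 * k := by
  rw [hM.1.card_mVerts, hM.2]

theorem IsEdgeClosed.mVerts_edgesMeeting (hS : IsEdgeClosed E S) :
    mVerts (edgesMeeting E S) = mVerts E ∩ S := by
  ext v
  simp only [edgesMeeting, mem_mVerts, Finset.mem_filter, Finset.mem_inter]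
  constructor
  · rintro ⟨e, ⟨he, w, hw, hwe⟩, hve⟩
    exact ⟨⟨e, he, hve⟩, hS e he w hwe hw v hve⟩
  · rintro ⟨⟨e, he, hve⟩, hv⟩
    exact ⟨e, ⟨he, v, hv, hve⟩, hve⟩

theorem IsEdgeClosed.mVerts_sdiff_edgesMeeting (hS : IsEdgeClosed E S) :
    mVerts (E \ edgesMeeting E S) = mVerts E \ S := by
  ext v
  simp only [edgesMeeting, mem_mVerts, Finset.mem_filter, Finset.mem_sdiff, not_and, not_exists]
  constructor
  · rintro ⟨e, ⟨he, hmeet⟩, hve⟩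
    exact ⟨⟨e, he, hve⟩, fun hv => hmeet he v hv hve⟩
  · rintro ⟨⟨e, he, hve⟩, hv⟩
    exact ⟨e, ⟨he, fun _ w hw hwe => hv (hS e he w hwe hw v hve)⟩, hve⟩

-- Some component of `M ∪ N` has more edges of `N` than of `M`. Counting edges against vertices, it
-- is an alternating path all of which is covered by `N`, while `M` misses exactly its two ends.
theorem IsMatching.exists_isEdgeClosed (hM : IsMatching F M) (hN : IsMatching F N)
    (hlt : M.card < N.card) :
    ∃ S, IsEdgeClosed (M ∪ N) S ∧ S ⊆ mVerts N ∧ (S \ mVerts M).card = 2 := by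
  obtain ⟨C, S, hS, hMN⟩ := exists_component_card_inter_lt
    (J := SimpleGraph.fromEdgeSet ((M ∪ N : Finset (Sym2 σ)) : Set (Sym2 σ)))
    (A := mVerts M) (B := mVerts N) (by rw [hM.card_mVerts, hN.card_mVerts]; lia)
  have hclosed := isEdgeClosed_of_coe_eq_supp hS
  have hcardM : (mVerts M ∩ S).card = 2 * (edgesMeeting M S).card := by
    rw [← (hclosed.mono Finset.subset_union_left).mVerts_edgesMeeting,
      (hM.mono edgesMeeting_subset).card_mVerts]
  have hcardN : (mVerts N ∩ S).card = 2 * (edgesMeeting N S).card := by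
    rw [← (hclosed.mono Finset.subset_union_right).mVerts_edgesMeeting,
      (hN.mono edgesMeeting_subset).card_mVerts]
  have htree : S.card ≤ (edgesMeeting M S).card + (edgesMeeting N S).card + 1 := by
    refine (card_le_card_edgesMeeting_add_one hS).trans (Nat.add_le_add_right ?_ 1)
    rw [edgesMeeting_union]
    exact Finset.card_union_le _ _
  have hNS : (mVerts N ∩ S).card ≤ S.card := Finset.card_le_card Finset.inter_subset_right
  refine ⟨S, hclosed, ?_, ?_⟩
  · rw [← Finset.inter_eq_right]
    exact Finset.eq_of_subset_of_card_le Finset.inter_subset_right (by lia)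
  · have := Finset.card_sdiff_add_card_inter S (mVerts M)
    rw [Finset.inter_comm] at this
    lia

theorem IsMatching.exists_augmentation (hM : IsMatching F M) (hN : IsMatching F N)
    (hlt : M.card < N.card) :
    ∃ T a b, IsKMatching F T (M.card + 1) ∧ a ∈ mVerts N ∧ b ∈ mVerts N ∧
      mVerts T = insert a (insert b (mVerts M)) := by
  obtain ⟨S, hclosed, hSN, hcard⟩ := hM.exists_isEdgeClosed hN hlt
  obtain ⟨a, b, -, hSM⟩ := Finset.card_eq_two.1 hcard
  have hout : mVerts (M \ edgesMeeting M S) = mVerts M \ S :=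
    (hclosed.mono Finset.subset_union_left).mVerts_sdiff_edgesMeeting
  have hin : mVerts (edgesMeeting N S) = S := by
    rw [(hclosed.mono Finset.subset_union_right).mVerts_edgesMeeting, Finset.inter_eq_right.2 hSN]
  have hT : IsMatching F (M \ edgesMeeting M S ∪ edgesMeeting N S) :=
    (hM.mono Finset.sdiff_subset).union (hN.mono edgesMeeting_subset) (by
      rw [hout, hin]
      exact Finset.sdiff_disjoint)
  have hverts : mVerts (M \ edgesMeeting M S ∪ edgesMeeting N S) = S \ mVerts M ∪ mVerts M := by
    rw [mVerts_union, hout, hin, Finset.sdiff_union_self_eq_union, Finset.sdiff_union_self_eq_union,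
      Finset.union_comm]
  have hTcard := hT.card_mVerts
  rw [hverts, Finset.card_union_of_disjoint Finset.sdiff_disjoint, hcard, hM.card_mVerts] at hTcard
  have hmem : ∀ v ∈ S \ mVerts M, v ∈ mVerts N := fun v hv => hSN (Finset.mem_sdiff.1 hv).1
  refine ⟨_, a, b, ⟨hT, by lia⟩, hmem a (by simp [hSM]), hmem b (by simp [hSM]), ?_⟩
  rw [hverts, hSM, Finset.insert_union, Finset.singleton_union]

theorem IsMatching.disjoint_mVerts (hE : IsMatching F E) (hM : M ⊆ E) (hN : N ⊆ E)
    (h : Disjoint M N) : Disjoint (mVerts M) (mVerts N) := by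
  refine Finset.disjoint_left.2 fun v hvM hvN => ?_
  obtain ⟨e, he, hve⟩ := mem_mVerts.1 hvM
  obtain ⟨f, hf, hvf⟩ := mem_mVerts.1 hvN
  exact Finset.disjoint_left.1 h he (hE.eq_of_mem (hM he) (hN hf) hve hvf ▸ hf)

theorem IsKMatching.insert_edge {k : ℕ} (hM : IsKMatching F M k) {a b : σ} (hab : F.Adj a b)
    (ha : a ∉ mVerts M) (hb : b ∉ mVerts M) : IsKMatching F (insert s(a, b) M) (k + 1) := by
  rw [Finset.insert_eq, Finset.union_comm]
  refine hM.union ⟨isMatching_singleton hab, Finset.card_singleton _⟩ ?_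
  simp [mVerts_singleton, ha, hb]

theorem IsMatching.mVerts_erase (hM : IsMatching F M) {a b : σ} (hab : s(a, b) ∈ M) :
    mVerts (M.erase s(a, b)) = mVerts M \ {a, b} := by
  have hverts : mVerts M = {a, b} ∪ mVerts (M.erase s(a, b)) := by
    rw [← mVerts_singleton, ← mVerts_union, ← Finset.insert_eq, Finset.insert_erase hab]
  have hdisj := hM.disjoint_mVerts (Finset.erase_subset _ _) (Finset.singleton_subset_iff.2 hab)
    (Finset.disjoint_singleton_right.2 (Finset.notMem_erase s(a, b) M))
  rw [mVerts_singleton] at hdisj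
  rw [hverts, Finset.union_sdiff_cancel_left hdisj.symm]

theorem IsKMatching.exists_insert_of_adj_or_adj {k : ℕ} (hM : IsKMatching F M k) {p j l : σ}
    (hp : p ∉ mVerts M) (hj : j ∉ mVerts M) (hl : l ∉ mVerts M) (h : F.Adj p j ∨ F.Adj p l) :
    ∃ T, IsKMatching F T (k + 1) ∧ mVerts T ⊆ insert p (insert j (insert l (mVerts M))) := by
  rcases h with h | h
  · refine ⟨_, hM.insert_edge h hp hj, ?_⟩
    rw [mVerts_insert]
    gcongr
    exact Finset.subset_insert _ _
  · refine ⟨_, hM.insert_edge h hp hl, ?_⟩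
    rw [mVerts_insert]
    gcongr
    exact Finset.subset_insert _ _

theorem IsMatching.exists_exchange {j l : σ} (hM : IsMatching F M) (hN : IsMatching F N)
    (hlt : M.card < N.card) (hj : j ∉ mVerts M) (hl : l ∉ mVerts M) (hjl : IsEdgeLinked F j l) :
    ∃ T b, IsKMatching F T (M.card + 1) ∧ b ∈ mVerts N ∧
      mVerts T ⊆ insert b (insert j (insert l (mVerts M))) := by
  obtain ⟨T, a, b, hT, haN, hbN, hverts⟩ := hM.exists_augmentation hN hlt
  set A := insert j (insert l (mVerts M)) with hA
  have hMA : mVerts M ⊆ A := (Finset.subset_insert _ _).trans (Finset.subset_insert _ _)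
  by_cases ha : a ∈ A
  · refine ⟨T, b, hT, hbN, ?_⟩
    rw [hverts, Finset.insert_comm]
    exact Finset.insert_subset_insert _ (Finset.insert_subset ha hMA)
  by_cases hb : b ∈ A
  · refine ⟨T, a, hT, haN, ?_⟩
    rw [hverts]
    exact Finset.insert_subset_insert _ (Finset.insert_subset hb hMA)
  simp only [hA, Finset.mem_insert, not_or] at ha hb
  obtain ⟨y, hay⟩ := exists_mk_mem_of_mem_mVerts (hverts ▸ Finset.mem_insert_self a _)
  have hadj : F.Adj a y := hT.1.1 hay
  have herase := hT.1.mVerts_erase hay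
  have hyT : y ∈ mVerts T := mem_mVerts.2 ⟨_, hay, Sym2.mem_mk_right a y⟩
  have hjT : j ∉ mVerts T := by simp [hverts, hj, Ne.symm ha.1, Ne.symm hb.1]
  have hlT : l ∉ mVerts T := by simp [hverts, hl, Ne.symm ha.2.1, Ne.symm hb.2.1]
  have hyj : y ≠ j := by rintro rfl; exact hjT hyT
  have hyl : y ≠ l := by rintro rfl; exact hlT hyT
  rcases hjl a y hadj ha.1 ha.2.1 hyj hyl with h | h
  · obtain ⟨T', hT', hsub⟩ := IsKMatching.exists_insert_of_adj_or_adj ⟨hM, rfl⟩ ha.2.2 hj hl h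
    exact ⟨T', a, hT', haN, hsub⟩
  · have hk : IsKMatching F (T.erase s(a, y)) M.card :=
      ⟨hT.1.mono (Finset.erase_subset _ _), by rw [Finset.card_erase_of_mem hay, hT.2]; rfl⟩
    obtain ⟨T', hT', hsub⟩ := hk.exists_insert_of_adj_or_adj (p := y) (j := j) (l := l)
      (by simp [herase]) (by simp [herase, hjT]) (by simp [herase, hlT]) h
    refine ⟨T', b, hT', hbN, hsub.trans ?_⟩
    have hyM : y ∈ insert b (mVerts M) :=
      (Finset.mem_insert.1 (hverts ▸ hyT)).resolve_left hadj.ne'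
    rw [herase, hverts]
    grind

end Matching

section ColexKey

variable {τ α : Type*} [LinearOrder α] {w : τ → α} {M N : Finset τ} {e : τ}

/-- Finite sets of weighted elements are compared by the largest weight that occurs in only one of
them; the set containing it is the larger one. -/
def colexKey (w : τ → α) (M : Finset τ) : Colex (Finset α) :=
  toColex (M.image w)

theorem colexKey_injective (hw : Function.Injective w) : Function.Injective (colexKey w) :=
  toColex.injective.comp (Finset.image_injective hw)

theorem colexKey_lt_iff (hw : Function.Injective w) :
    colexKey w N < colexKey w M ↔ ∃ e ∈ M, e ∉ N ∧ ∀ f, w e < w f → (f ∈ N ↔ f ∈ M) := by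
  rw [colexKey, colexKey, Finset.Colex.lt_iff_exists_filter_lt]
  simp only [Finset.mem_sdiff, Finset.filter_inj]
  constructor
  · rintro ⟨_, ⟨he, heN⟩, h⟩
    obtain ⟨e, heM, rfl⟩ := Finset.mem_image.1 he
    refine ⟨e, heM, fun h => heN (Finset.mem_image_of_mem w h), fun f hef => ?_⟩
    rw [← hw.mem_finset_image (s := N), h hef, hw.mem_finset_image]
  · rintro ⟨e, heM, heN, h⟩
    refine ⟨w e, by simp only [hw.mem_finset_image, heM, heN, not_false_eq_true, and_self], ?_⟩
    intro a hea
    by_cases ha : ∃ f, w f = a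
    · obtain ⟨f, rfl⟩ := ha
      rw [hw.mem_finset_image, hw.mem_finset_image, h f hea]
    · grind

theorem filter_le_eq_insert [DecidableEq τ] (hw : Function.Injective w) (he : e ∈ M) :
    {f ∈ M | w f ≤ w e} = insert e {f ∈ M | w f < w e} := by
  ext f
  simp only [Finset.mem_filter, Finset.mem_insert, le_iff_lt_or_eq, hw.eq_iff]
  grind

theorem card_filter_le_eq_card_filter_lt (hw : Function.Injective w) (hcard : M.card = N.card)
    (he : e ∉ N) (h : ∀ f, w e < w f → (f ∈ N ↔ f ∈ M)) :
    ({f ∈ M | w f ≤ w e} : Finset τ).card = ({f ∈ N | w f < w e} : Finset τ).card := by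
  have hM := Finset.card_filter_add_card_filter_not (s := M) (fun f => w f ≤ w e)
  have hN := Finset.card_filter_add_card_filter_not (s := N) (fun f => w f < w e)
  have hagree : {f ∈ M | ¬ w f ≤ w e} = {f ∈ N | ¬ w f < w e} := by
    ext f
    simp only [Finset.mem_filter, not_lt, le_iff_lt_or_eq, hw.eq_iff]
    grind
  rw [hagree] at hM
  lia

end ColexKey

section MatchingOrder

variable {σ α : Type*} [LinearOrder α] {G : SimpleGraph σ} {w : Sym2 σ → α}
  {M N T : Finset (Sym2 σ)} {e f : Sym2 σ}

/-- The subgraph of `G` formed by the edges whose weight is less than that of `e`. -/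
def edgesBelow (G : SimpleGraph σ) (w : Sym2 σ → α) (e : Sym2 σ) : SimpleGraph σ :=
  SimpleGraph.fromEdgeSet {f ∈ G.edgeSet | w f < w e}

theorem mem_edgeSet_edgesBelow :
    f ∈ (edgesBelow G w e).edgeSet ↔ f ∈ G.edgeSet ∧ w f < w e := by
  rw [edgesBelow, SimpleGraph.edgeSet_fromEdgeSet]
  exact ⟨fun h => h.1, fun h => ⟨h, G.not_isDiag_of_mem_edgeSet h.1⟩⟩

theorem edgesBelow_adj {a b : σ} :
    (edgesBelow G w e).Adj a b ↔ G.Adj a b ∧ w s(a, b) < w e :=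
  mem_edgeSet_edgesBelow (f := s(a, b))

theorem edgesBelow_le : edgesBelow G w e ≤ G :=
  fun _ _ hab => (edgesBelow_adj.1 hab).1

theorem IsMatching.filter_edgesBelow (hM : IsMatching G M) :
    IsMatching (edgesBelow G w e) {f ∈ M | w f < w e} := by
  refine ⟨fun f hf => ?_, hM.2.mono (Finset.filter_subset _ _)⟩
  obtain ⟨hfM, hfe⟩ := Finset.mem_filter.1 hf
  exact mem_edgeSet_edgesBelow.2 ⟨hM.1 hfM, hfe⟩

variable [Fintype σ] [DecidableEq σ] {k : ℕ} {b : σ}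

theorem IsKMatching.exists_colexKey_lt (hM : IsKMatching G M k) (hw : Function.Injective w)
    (he : e ∈ M)
    (hT : IsKMatching (edgesBelow G w e) T ({f ∈ M | w f ≤ w e} : Finset (Sym2 σ)).card)
    (hTM : mVerts T ⊆ insert b (mVerts {f ∈ M | w f ≤ w e}))
    (hb : b ∉ mVerts {f ∈ M | ¬ w f ≤ w e}) :
    ∃ M', IsKMatching G M' k ∧ colexKey w M' < colexKey w M ∧ mVerts M' ⊆ insert b (mVerts M) := by
  set L : Finset (Sym2 σ) := {f ∈ M | w f ≤ w e}
  set U : Finset (Sym2 σ) := {f ∈ M | ¬ w f ≤ w e} with hU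
  have hLM : L ⊆ M := Finset.filter_subset _ _
  have hUM : U ⊆ M := Finset.filter_subset _ _
  have hLU : Disjoint (mVerts L) (mVerts U) :=
    hM.1.disjoint_mVerts hLM hUM (Finset.disjoint_filter_filter_not _ _ _)
  have hTU : Disjoint (mVerts T) (mVerts U) :=
    (Finset.disjoint_insert_left.2 ⟨hb, hLU⟩).mono_left hTM
  have hcard : L.card + U.card = k := by
    rw [Finset.card_filter_add_card_filter_not, hM.2]
  have hbelow : ∀ f ∈ T, w f < w e := fun f hf => (mem_edgeSet_edgesBelow.1 (hT.1.1 hf)).2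
  have hTG : IsKMatching G T L.card := ⟨hT.1.mono_graph edgesBelow_le, hT.2⟩
  refine ⟨T ∪ U, hcard ▸ hTG.union ⟨hM.1.mono hUM, rfl⟩ hTU, ?_, ?_⟩
  · refine (colexKey_lt_iff hw).2 ⟨e, he, fun h => ?_, fun f hef => ?_⟩
    · rcases Finset.mem_union.1 h with h | h
      · exact lt_irrefl _ (hbelow e h)
      · exact (Finset.mem_filter.1 h).2 le_rfl
    · have hfT : f ∉ T := fun hf => lt_asymm hef (hbelow f hf)
      simp [hU, hfT, hef]
  · rw [mVerts_union]
    exact Finset.union_subset (hTM.trans (Finset.insert_subset_insert _ (mVerts_mono hLM)))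
      ((mVerts_mono hUM).trans (Finset.subset_insert _ _))

theorem IsKMatching.exists_exchange (hM : IsKMatching G M k) (hN : IsKMatching G N k)
    (hw : Function.Injective w)
    (hlink : ∀ j l, G.Adj j l → IsEdgeLinked (edgesBelow G w s(j, l)) j l)
    (hlt : colexKey w N < colexKey w M) :
    ∃ M', IsKMatching G M' k ∧ colexKey w M' < colexKey w M ∧
      ∃ b ∈ mVerts N, mVerts M' ⊆ insert b (mVerts M) := by
  obtain ⟨e, heM, heN, habove⟩ := (colexKey_lt_iff hw).1 hlt
  obtain ⟨j, l⟩ := e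
  change s(j, l) ∈ M at heM
  set e := s(j, l)
  set M₁ : Finset (Sym2 σ) := {f ∈ M | w f < w e}
  set N₁ : Finset (Sym2 σ) := {f ∈ N | w f < w e}
  have hinsert : {f ∈ M | w f ≤ w e} = insert e M₁ := filter_le_eq_insert hw heM
  have he : e ∉ M₁ := fun h => lt_irrefl _ (Finset.mem_filter.1 h).2
  have hcard : (insert e M₁).card = N₁.card :=
    hinsert ▸ card_filter_le_eq_card_filter_lt hw (hM.2.trans hN.2.symm) heN habove
  rw [Finset.card_insert_of_notMem he] at hcard
  have hdisj : Disjoint {j, l} (mVerts M₁) := by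
    rw [← mVerts_singleton]
    exact hM.1.disjoint_mVerts (Finset.singleton_subset_iff.2 heM) (Finset.filter_subset _ _)
      (Finset.disjoint_singleton_left.2 he)
  obtain ⟨T, b, hT, hbN₁, hTM⟩ := (hM.1.filter_edgesBelow (w := w) (e := e)).exists_exchange
    hN.1.filter_edgesBelow (by lia) (Finset.disjoint_left.1 hdisj (by simp))
    (Finset.disjoint_left.1 hdisj (by simp)) (hlink j l (hM.1.1 heM))
  have hb : b ∉ mVerts {f ∈ M | ¬ w f ≤ w e} := by
    refine Finset.disjoint_left.1 (hN.1.disjoint_mVerts (Finset.filter_subset _ _) ?_ ?_) hbN₁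
    · grind
    · grind [Finset.disjoint_left]
  obtain ⟨M', hM', hlt', hsub⟩ := hM.exists_colexKey_lt hw heM (T := T) (b := b)
    (by rwa [hinsert, Finset.card_insert_of_notMem he]) (by rwa [hinsert, mVerts_insert]) hb
  exact ⟨M', hM', hlt', b, mVerts_mono (Finset.filter_subset _ _) hbN₁, hsub⟩

end MatchingOrder

section EdgeWeight

variable {σ : Type*} {r : σ → ℕ}

/-- The lexicographic weight of an edge: its lower rank first, then its higher rank. -/
def edgeWeight (r : σ → ℕ) (e : Sym2 σ) : ℕ ×ₗ ℕ :=
  toLex ((e.map r).inf, (e.map r).sup)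

theorem edgeWeight_injective (hr : Function.Injective r) :
    Function.Injective (edgeWeight r) := by
  intro e f hef
  obtain ⟨hinf, hsup⟩ := Prod.ext_iff.1 (toLex.injective hef)
  exact Sym2.map.injective hr (Sym2.inf_eq_inf_and_sup_eq_sup.1 ⟨hinf, hsup⟩)

theorem edgeWeight_lt_of_inf_lt {a b c d : σ} (h : min (r a) (r b) < min (r c) (r d)) :
    edgeWeight r s(a, b) < edgeWeight r s(c, d) :=
  Prod.Lex.toLex_lt_toLex.2 (.inl h)

theorem inf_le_of_edgeWeight_lt {a b c d : σ} (h : edgeWeight r s(a, b) < edgeWeight r s(c, d)) :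
    min (r a) (r b) ≤ min (r c) (r d) :=
  (Prod.Lex.toLex_lt_toLex.1 h).elim le_of_lt fun h => h.1.le

theorem IsPerfectElimination.isEdgeLinked_edgesBelow {G : SimpleGraph σ}
    (hr : IsPerfectElimination Gᶜ r) {j l : σ} (hjl : G.Adj j l) :
    IsEdgeLinked (edgesBelow G (edgeWeight r) s(j, l)) j l := by
  have hlower : ∀ a, r a < min (r j) (r l) → (edgesBelow G (edgeWeight r) s(j, l)).Adj a j ∨
      (edgesBelow G (edgeWeight r) s(j, l)).Adj a l := fun a ha => by
    rw [edgesBelow_adj, edgesBelow_adj]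
    refine (hr.adj_or_adj_of_compl (ha.trans_le (min_le_left _ _))
      (ha.trans_le (min_le_right _ _)) hjl).imp ?_ ?_ <;>
    exact fun h => ⟨h, edgeWeight_lt_of_inf_lt ((min_le_left _ _).trans_lt ha)⟩
  have hstrict : ∀ v, v ≠ j → v ≠ l → r v ≤ min (r j) (r l) → r v < min (r j) (r l) :=
    fun v hvj hvl hle => by
      have := hr.injective.ne hvj
      have := hr.injective.ne hvl
      lia
  intro a y hay haj hal hyj hyl
  have hmin := inf_le_of_edgeWeight_lt (edgesBelow_adj.1 hay).2
  rcases min_le_iff.1 hmin with h | h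
  · exact .inl (hlower a (hstrict a haj hal h))
  · exact .inr (hlower y (hstrict y hyj hyl h))

end EdgeWeight

section SquarefreeIdeal

variable {σ : Type*}

/-- The exponent vector of the squarefree monomial `∏ v ∈ U, X v`. -/
noncomputable def sqfreeExp (U : Finset σ) : σ →₀ ℕ :=
  ∑ v ∈ U, Finsupp.single v 1

theorem sqfreeExp_apply [DecidableEq σ] (U : Finset σ) (v : σ) :
    sqfreeExp U v = if v ∈ U then 1 else 0 := by
  simp [sqfreeExp, Finsupp.finsetSum_apply, Finsupp.single_apply]

theorem support_sqfreeExp (U : Finset σ) : (sqfreeExp U).support = U := by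
  classical
  ext v
  simp [sqfreeExp_apply]

theorem sqfreeExp_le_iff {U : Finset σ} {d : σ →₀ ℕ} : sqfreeExp U ≤ d ↔ U ⊆ d.support := by
  classical
  refine ⟨fun h => support_sqfreeExp U ▸ Finsupp.support_mono h, fun h v => ?_⟩
  rw [sqfreeExp_apply]
  split_ifs with hv
  · exact Nat.one_le_iff_ne_zero.2 (Finsupp.mem_support_iff.1 (h hv))
  · exact Nat.zero_le _

theorem support_add_sqfreeExp [DecidableEq σ] (d : σ →₀ ℕ) (U : Finset σ) :
    (d + sqfreeExp U).support = d.support ∪ U := by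
  ext v
  simp [sqfreeExp_apply, or_iff_not_imp_left]

variable (K : Type*) [CommSemiring K]

theorem prod_X_eq_monomial (U : Finset σ) :
    (∏ v ∈ U, X v : MvPolynomial σ K) = monomial (sqfreeExp U) 1 :=
  (monomial_sum_one U fun v => Finsupp.single v 1).symm

theorem prod_X_injective [Nontrivial K] :
    Function.Injective fun U : Finset σ => (∏ v ∈ U, X v : MvPolynomial σ K) := by
  intro U V h
  simp only [prod_X_eq_monomial] at h
  rw [← support_sqfreeExp U, monomial_left_injective one_ne_zero h, support_sqfreeExp]

/-- The squarefree monomial ideal generated by the products `∏ v ∈ U, X v` for `U ∈ P`. -/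
noncomputable def sqfreeSpan (P : Set (Finset σ)) : Ideal (MvPolynomial σ K) :=
  Ideal.span ((fun U => ∏ v ∈ U, X v) '' P)

variable {K} {P : Set (Finset σ)} {U : Finset σ}

theorem mem_sqfreeSpan_iff {f : MvPolynomial σ K} :
    f ∈ sqfreeSpan K P ↔ ∀ d ∈ f.support, ∃ V ∈ P, V ⊆ d.support := by
  have himage : (fun U => ∏ v ∈ U, X v) '' P =
      (fun d => monomial d (1 : K)) '' (sqfreeExp '' P) := by
    simp only [Set.image_image, prod_X_eq_monomial]
  rw [sqfreeSpan, himage, mem_ideal_span_monomial_image]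
  simp only [Set.exists_mem_image, sqfreeExp_le_iff]

theorem monomial_mem_sqfreeSpan_iff [Nontrivial K] {d : σ →₀ ℕ} :
    monomial d (1 : K) ∈ sqfreeSpan K P ↔ ∃ V ∈ P, V ⊆ d.support := by
  classical
  simp [mem_sqfreeSpan_iff, support_monomial]

theorem mul_prod_X_mem_sqfreeSpan_iff [DecidableEq σ] {f : MvPolynomial σ K} :
    f * ∏ v ∈ U, X v ∈ sqfreeSpan K P ↔ ∀ d ∈ f.support, ∃ V ∈ P, V ⊆ d.support ∪ U := by
  have hsupport : (f * monomial (sqfreeExp U) 1).support =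
      f.support.map (addRightEmbedding (sqfreeExp U)) :=
    AddMonoidAlgebra.support_coeff_mul_single _ _ (by simp) _
  rw [mem_sqfreeSpan_iff, prod_X_eq_monomial, hsupport]
  simp [support_add_sqfreeExp]

theorem colon_sqfreeSpan_eq [DecidableEq σ]
    (h : ∀ V ∈ P, ∃ W ∈ P, ∃ b ∈ V, b ∉ U ∧ W ⊆ insert b U) :
    Submodule.colon (sqfreeSpan K P) (Ideal.span {∏ v ∈ U, X v} : Ideal (MvPolynomial σ K)) =
      Ideal.span (X '' {b | b ∉ U ∧ ∃ W ∈ P, W ⊆ insert b U}) := by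
  ext f
  rw [Ideal.mem_colon_span_singleton, mul_prod_X_mem_sqfreeSpan_iff, mem_ideal_span_X_image]
  refine forall₂_congr fun d _ => ⟨?_, ?_⟩
  · rintro ⟨V, hV, hVd⟩
    obtain ⟨W, hW, b, hbV, hbU, hWU⟩ := h V hV
    have hbd := (Finset.mem_union.1 (hVd hbV)).resolve_right hbU
    exact ⟨b, ⟨hbU, W, hW, hWU⟩, Finsupp.mem_support_iff.1 hbd⟩
  · rintro ⟨b, ⟨_, W, hW, hWU⟩, hbd⟩
    refine ⟨W, hW, hWU.trans (Finset.insert_subset ?_ Finset.subset_union_right)⟩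
    exact Finset.mem_union_left _ (Finsupp.mem_support_iff.2 hbd)

theorem minGens_sqfreeSpan {K : Type*} [Field K] (hP : IsAntichain (· ⊆ ·) P) :
    minGens K (sqfreeSpan K P) = (fun U => ∏ v ∈ U, X v) '' P := by
  ext u
  simp only [Set.mem_image, prod_X_eq_monomial]
  constructor
  · rintro ⟨⟨d, rfl⟩, hd, hmin⟩
    obtain ⟨U, hU, hUd⟩ := monomial_mem_sqfreeSpan_iff.1 hd
    refine ⟨U, hU, hmin _ ⟨_, rfl⟩ ?_ ?_⟩
    · exact monomial_mem_sqfreeSpan_iff.2 ⟨U, hU, (support_sqfreeExp U).ge⟩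
    · exact monomial_dvd_monomial.2 ⟨.inr (sqfreeExp_le_iff.2 hUd), dvd_rfl⟩
  · rintro ⟨U, hU, rfl⟩
    refine ⟨⟨_, rfl⟩, monomial_mem_sqfreeSpan_iff.2 ⟨U, hU, (support_sqfreeExp U).ge⟩, ?_⟩
    rintro _ ⟨d, rfl⟩ hd hdvd
    obtain ⟨V, hV, hVd⟩ := monomial_mem_sqfreeSpan_iff.1 hd
    have hdU : d ≤ sqfreeExp U := (monomial_dvd_monomial.1 hdvd).1.resolve_left one_ne_zero
    have hdU' : d.support ⊆ U := support_sqfreeExp U ▸ Finsupp.support_mono hdU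
    obtain rfl : V = U := hP.eq hV hU (hVd.trans hdU')
    rw [le_antisymm hdU (sqfreeExp_le_iff.2 hVd)]

end SquarefreeIdeal

section LinearQuotients

theorem mem_take_iff_of_pairwise_lt {β α : Type*} [LinearOrder α] {κ : β → α} {l : List β}
    (hl : l.Pairwise fun a b => κ a < κ b) {i : ℕ} (hi : i < l.length) {b : β} :
    b ∈ l.take i ↔ b ∈ l ∧ κ b < κ l[i] := by
  rw [List.pairwise_iff_getElem] at hl
  rw [List.mem_take_iff_getElem]
  constructor
  · rintro ⟨j, hj, rfl⟩
    exact ⟨List.getElem_mem _, hl _ _ _ _ (by lia)⟩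
  · rintro ⟨hb, hlt⟩
    obtain ⟨j, hj, rfl⟩ := List.getElem_of_mem hb
    refine ⟨j, lt_min ?_ hj, rfl⟩
    by_contra! hij
    rcases hij.eq_or_lt with rfl | hij
    · exact lt_irrefl _ hlt
    · exact lt_asymm hlt (hl _ _ _ _ hij)

theorem exists_list_pairwise_lt {β α : Type*} [LinearOrder α] {κ : β → α} {S : Finset β}
    (hκ : Set.InjOn κ S) :
    ∃ l : List β, (∀ b, b ∈ l ↔ b ∈ S) ∧ l.Pairwise fun a b => κ a < κ b := by
  let l := S.toList.mergeSort (fun a b => κ a ≤ κ b)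
  have hmem : ∀ b, b ∈ l ↔ b ∈ S := fun b => by simp [l]
  have hnodup : l.Nodup := (List.mergeSort_perm _ _).nodup_iff.2 S.nodup_toList
  have hle : l.Pairwise fun a b => κ a ≤ κ b := by
    simpa using List.pairwise_mergeSort (le := fun a b => κ a ≤ κ b)
      (by simpa using fun a b c => le_trans) (by simpa using fun a b => le_total (κ a) (κ b))
      S.toList
  refine ⟨l, hmem, (hle.and hnodup).imp_of_mem fun ha hb hab => ?_⟩
  exact hab.1.lt_of_ne fun h => hab.2 (hκ ((hmem _).1 ha) ((hmem _).1 hb) h)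

theorem exists_le_of_mem_image {ι α β : Type*} [LinearOrder α] [DecidableEq β] {S : Finset ι}
    {U : ι → β} (κ : ι → α) {A : β} (hA : A ∈ S.image U) :
    ∃ i ∈ S, U i = A ∧ ∀ j ∈ S, U j = A → κ i ≤ κ j := by
  obtain ⟨i, hi, hmin⟩ := Finset.exists_min_image {i ∈ S | U i = A} κ
    (by simpa [Finset.filter_nonempty_iff] using hA)
  rw [Finset.mem_filter] at hi
  exact ⟨i, hi.1, hi.2, fun j hj hjA => hmin j (Finset.mem_filter.2 ⟨hj, hjA⟩)⟩

variable {σ : Type*} [DecidableEq σ] {K : Type*} [Field K]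

theorem hasLinearQuotientsOrder_sqfreeSpan {l : List (Finset σ)} (hnodup : l.Nodup)
    (hanti : IsAntichain (· ⊆ ·) {U | U ∈ l})
    (hex : ∀ (i : ℕ) (hi : i < l.length), ∀ V ∈ l.take i,
      ∃ W ∈ l.take i, ∃ b ∈ V, b ∉ l[i] ∧ W ⊆ insert b l[i]) :
    HasLinearQuotientsOrder K (sqfreeSpan K {U | U ∈ l}) (l.map fun U => ∏ v ∈ U, X v) := by
  refine ⟨hnodup.map (prod_X_injective K), fun u => ?_, fun ⟨i, hi⟩ _ => ?_⟩
  · rw [minGens_sqfreeSpan hanti, List.mem_map]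
    rfl
  · have hi' : i < l.length := by simpa using hi
    have htake : {u | u ∈ (l.map fun U => (∏ v ∈ U, X v : MvPolynomial σ K)).take i} =
        (fun U => ∏ v ∈ U, X v) '' {U | U ∈ l.take i} := by
      ext u
      rw [← List.map_take]
      exact List.mem_map
    refine ⟨_, Eq.trans ?_ (colon_sqfreeSpan_eq (P := {U | U ∈ l.take i}) (hex i hi'))⟩
    rw [sqfreeSpan, htake, List.get_eq_getElem, List.getElem_map]

theorem hasLinearQuotients_sqfreeSpan {α : Type*} [LinearOrder α] {S : Finset (Finset σ)}
    {κ : Finset σ → α} (hκ : Set.InjOn κ S) (hanti : IsAntichain (· ⊆ ·) (S : Set (Finset σ)))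
    (hex : ∀ U ∈ S, ∀ V ∈ S, κ V < κ U → ∃ W ∈ S, κ W < κ U ∧ ∃ b ∈ V, b ∉ U ∧ W ⊆ insert b U) :
    HasLinearQuotients K (sqfreeSpan K (S : Set (Finset σ))) := by
  obtain ⟨l, hmem, hl⟩ := exists_list_pairwise_lt hκ
  have hS : (S : Set (Finset σ)) = {U | U ∈ l} := Set.ext fun U => (hmem U).symm
  rw [hS] at hanti ⊢
  refine ⟨_, hasLinearQuotientsOrder_sqfreeSpan
    (hl.imp fun h => by rintro rfl; exact lt_irrefl _ h) hanti fun i hi V hV => ?_⟩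
  simp only [mem_take_iff_of_pairwise_lt hl hi, hmem] at hV ⊢
  obtain ⟨W, hW, hlt, hb⟩ := hex _ ((hmem _).1 (List.getElem_mem hi)) V hV.1 hV.2
  exact ⟨W, ⟨hW, hlt⟩, hb⟩

-- Each generator `U i` is listed at the position of the smallest key among its indices; minimality
-- of that key is what forces the exchanged vertex `b` to be new.
theorem hasLinearQuotients_sqfreeSpan_image {ι α : Type*} [LinearOrder α] {S : Finset ι}
    {U : ι → Finset σ} {κ : ι → α} {c : ℕ} (hκ : Set.InjOn κ S) (hcard : ∀ i ∈ S, (U i).card = c)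
    (hex : ∀ i ∈ S, ∀ j ∈ S, κ j < κ i →
      ∃ i' ∈ S, κ i' < κ i ∧ ∃ b ∈ U j, U i' ⊆ insert b (U i)) :
    HasLinearQuotients K (sqfreeSpan K (U '' S)) := by
  rw [← Finset.coe_image]
  obtain hS | hS := S.eq_empty_or_nonempty
  · exact hasLinearQuotients_sqfreeSpan (κ := fun _ => 0) (by simp [hS]) (by simp [hS])
      (by simp [hS])
  have : Nonempty ι := ⟨hS.choose⟩
  choose! m hmS hmU hmin using fun A (hA : A ∈ S.image U) => exists_le_of_mem_image κ hA
  have heq : ∀ i ∈ S, ∀ j ∈ S, U i ⊆ U j → U i = U j := fun i hi j hj h =>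
    Finset.eq_of_subset_of_card_le h (by rw [hcard i hi, hcard j hj])
  refine hasLinearQuotients_sqfreeSpan (κ := fun A => κ (m A)) ?_ ?_ ?_
  · intro A hA B hB hAB
    rw [← hmU A hA, hκ (hmS A hA) (hmS B hB) hAB, hmU B hB]
  · intro A hA B hB hne hAB
    rw [← hmU A hA, ← hmU B hB] at hne hAB
    exact hne (heq _ (hmS A hA) _ (hmS B hB) hAB)
  · intro A hA B hB hlt
    obtain ⟨i', hi', hlt', b, hb, hsub⟩ := hex _ (hmS A hA) _ (hmS B hB) hlt
    have hi'image := Finset.mem_image_of_mem U hi'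
    rw [hmU B hB] at hb
    rw [hmU A hA] at hsub
    refine ⟨U i', hi'image, (hmin _ hi'image i' hi' rfl).trans_lt hlt', b, hb, fun hbA => ?_, hsub⟩
    rw [Finset.insert_eq_of_mem hbA, ← hmU A hA] at hsub
    exact (hmin A hA i' hi' ((heq i' hi' _ (hmS A hA) hsub).trans (hmU A hA))).not_gt hlt'

end LinearQuotients

theorem matchPow_hasLinearQuotients_of_cochordal_general {K : Type*} [Field K] {σ : Type*}
    [Fintype σ] [DecidableEq σ] (G : SimpleGraph σ) (hchord : IsChordal Gᶜ) (k : ℕ) :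
    HasLinearQuotients K (matchPow K G k) := by
  classical
  obtain ⟨r, hr⟩ := hchord.exists_isPerfectElimination
  have hw := edgeWeight_injective hr.injective
  let S : Finset (Finset (Sym2 σ)) := {M | IsKMatching G M k}
  have hS : ∀ {M}, M ∈ S ↔ IsKMatching G M k := by simp [S]
  have hpow : matchPow K G k = sqfreeSpan K (mVerts '' (S : Set (Finset (Sym2 σ)))) := by
    rw [matchPow, sqfreeSpan, Set.image_image]
    congr 1
    ext u
    simp only [Set.mem_ofPred_eq, Set.mem_image, Finset.mem_coe, hS, matchMon, eq_comm]
  rw [hpow]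
  refine hasLinearQuotients_sqfreeSpan_image (κ := colexKey (edgeWeight r)) (c := 2 * k)
    (colexKey_injective hw).injOn (fun M hM => (hS.1 hM).card_mVerts) fun M hM N hN hlt => ?_
  obtain ⟨M', hM', hlt', hb⟩ := (hS.1 hM).exists_exchange (hS.1 hN) hw
    (fun j l => hr.isEdgeLinked_edgesBelow) hlt
  exact ⟨M', hS.2 hM', hlt', hb⟩

/-- Let `G` be a cochordal graph (i.e. `G^c` is chordal). Then
for every `1 ≤ k ≤ ν(G)` the squarefree power `I(G)^{[k]}` has linear quotients. -/
theorem matchPow_hasLinearQuotients_of_cochordal {K : Type*} [Field K] {n : ℕ}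
    (G : SimpleGraph (Fin n)) (hchord : IsChordal Gᶜ) :
    ∀ k : ℕ, 1 ≤ k → k ≤ matchNum G → HasLinearQuotients K (matchPow K G k) :=
  fun k _ _ => matchPow_hasLinearQuotients_of_cochordal_general G hchord k
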